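/- Let Γ be a group generated by a finite set S, let L be an (r,k)-rule, and let α be a free p.m.p. action of Γ on a standard Borel probability space (X, μ) that has an (ε, L)-good coloring for every ε > 0. Then there exists a free p.m.p. action β of Γ on a standard Borel probability space (Y, ν) such that β is weakly equivalent to α, β contains α as a factor (there is a Borel map π : Y → X with π_*ν = μ and π ∘ β_γ = α_γ ∘ π almost everywhere for all γ ∈ Γ), and β has a (0, L)-good coloring, i.e. β properly satisfies L. -/

import Mathlib

open MeasureTheory

/-- A probability-measure-preserving action of a group `G` on a measure space. -/
structure PMP (G : Type*) [Group G] (X : Type*) [MeasurableSpace X] (μ : Measure X) where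
  act : G → X → X
  measurable : ∀ γ, Measurable (act γ)
  preserves : ∀ γ, MeasurePreserving (act γ) μ μ
  act_one : ∀ x, act 1 x = x
  act_mul : ∀ γ₁ γ₂ x, act (γ₁ * γ₂) x = act γ₁ (act γ₂ x)

/-- `f` weakly contains `g`. -/
def WeaklyContains {G : Type*} [Group G] {X Y : Type*} [MeasurableSpace X] [MeasurableSpace Y]
    {μ : Measure X} {ν : Measure Y} (f : PMP G X μ) (g : PMP G Y ν) : Prop :=
  ∀ n : ℕ, 1 ≤ n → ∀ C : Y → Fin n, Measurable C →
    ∀ F : Finset G, ∀ ε : ℝ, 0 < ε →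
      ∃ D : X → Fin n, Measurable D ∧
        ∀ i j : Fin n, ∀ γ ∈ F,
          |(μ (f.act γ '' (D ⁻¹' {i}) ∩ D ⁻¹' {j})).toReal -
            (ν (g.act γ '' (C ⁻¹' {i}) ∩ C ⁻¹' {j})).toReal| ≤ ε

/-- Weak equivalence of p.m.p. actions. -/
def WeaklyEquivalent {G : Type*} [Group G] {X Y : Type*} [MeasurableSpace X] [MeasurableSpace Y]
    {μ : Measure X} {ν : Measure Y} (f : PMP G X μ) (g : PMP G Y ν) : Prop :=
  WeaklyContains f g ∧ WeaklyContains g f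

/-- The action `f` is (essentially) free. -/
def IsFreeAction {G : Type*} [Group G] {X : Type*} [MeasurableSpace X] {μ : Measure X}
    (f : PMP G X μ) : Prop :=
  ∀ᵐ x ∂μ, ∀ γ : G, f.act γ x = x → γ = 1

/-- The ball of radius `r` around the identity in the Cayley graph `Cay(Γ, S)`. -/
def cayleyBall {Γ : Type*} [Group Γ] (S : Finset Γ) (r : ℕ) : Set Γ :=
  {γ | ∃ l : List Γ, l.length ≤ r ∧ (∀ x ∈ l, x ∈ S ∨ x⁻¹ ∈ S) ∧ l.prod = γ}

/-- The `k`-coloring of the `r`-ball around `x` induced by `φ` and the action `f`. -/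
def ballColoring {Γ X : Type*} [Group Γ] [MeasurableSpace X] {μ : Measure X}
    (f : PMP Γ X μ) (S : Finset Γ) (r k : ℕ) (φ : X → Fin k) (x : X) :
    cayleyBall S r → Fin k :=
  fun γ => φ (f.act ↑γ x)

/-- `φ` is an `(ε, L)`-good coloring for the action `f`. -/
def GoodColoring {Γ X : Type*} [Group Γ] [MeasurableSpace X] {μ : Measure X}
    (f : PMP Γ X μ) (S : Finset Γ) {r k : ℕ} (L : Set (cayleyBall S r → Fin k))
    (ε : ℝ) (φ : X → Fin k) : Prop :=
  Measurable φ ∧ 1 - ε ≤ (μ {x | ballColoring f S r k φ x ∈ L}).toReal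

/-- The action `f` almost satisfies the rule `L`. -/
def AlmostSatisfies {Γ X : Type*} [Group Γ] [MeasurableSpace X] {μ : Measure X}
    (f : PMP Γ X μ) (S : Finset Γ) {r k : ℕ} (L : Set (cayleyBall S r → Fin k)) : Prop :=
  ∀ ε : ℝ, 0 < ε → ∃ φ : X → Fin k, GoodColoring f S L ε φ

/-- The action `f` properly satisfies the rule `L`. -/
def ProperlySatisfies {Γ X : Type*} [Group Γ] [MeasurableSpace X] {μ : Measure X}
    (f : PMP Γ X μ) (S : Finset Γ) {r k : ℕ} (L : Set (cayleyBall S r → Fin k)) : Prop :=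
  ∃ φ : X → Fin k, Measurable φ ∧ μ {x | ballColoring f S r k φ x ∈ L} = 1

/-- A p.m.p. action of `Γ` on some standard Borel probability space. -/
structure PMPSpace (Γ : Type) [Group Γ] where
  Y : Type
  mY : MeasurableSpace Y
  sbY : @StandardBorelSpace Y mY
  ν : @Measure Y mY
  probY : @IsProbabilityMeasure Y mY ν
  act : @PMP Γ _ Y mY ν

attribute [instance] PMPSpace.mY PMPSpace.sbY PMPSpace.probY

/-!
Embed `X` in the Cantor space by `e`, let `φ n` be a `(1 / (n + 1), L)`-good coloring of `α`, and
code a point `x` by the map `γ ↦ (e (γ • x), φ n (γ • x))`. The laws of these codes are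
shift-invariant measures on a compact zero-dimensional space; let `ν` be a weak limit of them along
an ultrafilter. The first coordinate of the code does not depend on `n`, so the shift on `ν`
still factors onto `α`, and hence weakly contains `α` and is free if `α` is. Conversely, `ν` is a
limit of laws of factors of `α` and clopen sets approximate all measurable sets, so `α` weakly
contains the shift on `ν`. Finally, `L` looks at finitely many coordinates only, so obeying it is a
clopen condition, whose measure passes to the limit.
-/

open Filter Topology TopologicalSpace ProbabilityTheory
open scoped ENNReal symmDiff

/-! ### Approximation by clopen sets and locally constant maps -/

section ClopenApproximation

variable {K κ : Type*} [TopologicalSpace K]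

theorem isLocallyConstant_setOf_mem [Finite κ] {t : κ → Set K} (ht : ∀ i, IsClopen (t i)) :
    IsLocallyConstant fun y => {i | y ∈ t i} := by
  refine (IsLocallyConstant.iff_eventually_eq _).2 fun x => ?_
  have mem_iff_near : ∀ i, ∀ᶠ y in 𝓝 x, (y ∈ t i ↔ x ∈ t i) := fun i => by
    by_cases hx : x ∈ t i
    · filter_upwards [(ht i).isOpen.mem_nhds hx] with y hy using iff_of_true hy hx
    · filter_upwards [(ht i).compl.isOpen.mem_nhds hx] with y hy using iff_of_false hy hx
  exact (eventually_all.2 mem_iff_near).mono fun y hy => Set.ext hy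

variable [SecondCountableTopology K] [MeasurableSpace K] [BorelSpace K]

theorem exists_isClopen_measure_symmDiff_lt (hK : IsTopologicalBasis {s : Set K | IsClopen s})
    (ν : Measure K) [IsFiniteMeasure ν] {A : Set K} (hA : MeasurableSet A) {ε : ℝ≥0∞}
    (hε : 0 < ε) : ∃ t, IsClopen t ∧ ν (t ∆ A) < ε := by
  have isSetRing_clopens : IsSetRing {s : Set K | IsClopen s} :=
    ⟨isClopen_empty, fun _ _ hs ht => hs.union ht, fun _ _ hs ht => hs.diff ht⟩
  refine exists_measure_symmDiff_lt_of_generateFrom_isSetRing isSetRing_clopens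
    ⟨{Set.univ}, Set.countable_singleton _, by simpa using isClopen_univ, by simp⟩ ?_ hA hε
  rw [BorelSpace.measurable_eq (α := K)]
  exact hK.borel_eq_generateFrom

theorem exists_isLocallyConstant_measureReal_ne_le
    (hK : IsTopologicalBasis {s : Set K | IsClopen s}) (ν : Measure K) [IsFiniteMeasure ν]
    [Finite κ] [Nonempty κ] [MeasurableSpace κ] [MeasurableSingletonClass κ]
    {C : K → κ} (hC : Measurable C) {δ : ℝ} (hδ : 0 < δ) :
    ∃ C' : K → κ, IsLocallyConstant C' ∧ ν.real {y | C y ≠ C' y} ≤ δ := by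
  have := Fintype.ofFinite κ
  have hδκ : 0 < δ / Fintype.card κ := by positivity
  choose t ht htν using fun i => exists_isClopen_measure_symmDiff_lt hK ν
    (hC (measurableSet_singleton i)) (ENNReal.ofReal_pos.2 hδκ)
  -- Wherever `y` lies in `t i` exactly for `i = C y`, the value `C y` is read off `{i | y ∈ t i}`.
  let decode : Set κ → κ := Function.invFun singleton
  refine ⟨fun y => decode {i | y ∈ t i}, (isLocallyConstant_setOf_mem ht).comp decode, ?_⟩
  have ne_subset : {y | C y ≠ decode {i | y ∈ t i}} ⊆ ⋃ i, t i ∆ (C ⁻¹' {i}) := by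
    refine fun y hy => by_contra fun hy_notMem => hy ?_
    have cell_eq : {i | y ∈ t i} = {C y} := by
      ext i
      simp only [Set.mem_iUnion, Set.mem_symmDiff, Set.mem_preimage, Set.mem_singleton_iff,
        not_exists] at hy_notMem
      have := hy_notMem i
      simp only [Set.mem_ofPred_eq, Set.mem_singleton_iff]
      tauto
    rw [cell_eq]
    exact (Function.leftInverse_invFun Set.singleton_injective (C y)).symm
  calc ν.real {y | C y ≠ decode {i | y ∈ t i}}
      ≤ ν.real (⋃ i, t i ∆ (C ⁻¹' {i})) := measureReal_mono ne_subset
    _ ≤ ∑ i, ν.real (t i ∆ (C ⁻¹' {i})) := measureReal_iUnion_fintype_le _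
    _ ≤ ∑ _i : κ, δ / Fintype.card κ :=
        Finset.sum_le_sum fun i _ => ENNReal.toReal_le_of_le_ofReal hδκ.le (htν i).le
    _ = δ := by simp [field]

end ClopenApproximation

/-! ### Overlaps of the cells of a partition with their translates -/

section Overlap

variable {G X Y κ : Type*} [Group G] [MeasurableSpace X] [MeasurableSpace Y]
  {μ : Measure X} {ν : Measure Y}

/-- The overlap of the `i`-th cell of the partition `C`, translated by `γ`, with the `j`-th cell:
the sets whose measures are compared in the definition of weak containment. -/
def PMP.overlap (f : PMP G X μ) (C : X → κ) (γ : G) (i j : κ) : Set X :=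
  f.act γ '' (C ⁻¹' {i}) ∩ C ⁻¹' {j}

theorem PMP.image_act_eq_preimage (f : PMP G X μ) (γ : G) (A : Set X) :
    f.act γ '' A = f.act γ⁻¹ ⁻¹' A :=
  congrFun (Set.image_eq_preimage_of_inverse
    (fun x => by rw [← f.act_mul, inv_mul_cancel, f.act_one])
    (fun x => by rw [← f.act_mul, mul_inv_cancel, f.act_one])) A

theorem PMP.overlap_eq (f : PMP G X μ) (C : X → κ) (γ : G) (i j : κ) :
    f.overlap C γ i j = f.act γ⁻¹ ⁻¹' (C ⁻¹' {i}) ∩ C ⁻¹' {j} := by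
  rw [overlap, image_act_eq_preimage]

theorem PMP.mem_overlap {f : PMP G X μ} {C : X → κ} {γ : G} {i j : κ} {x : X} :
    x ∈ f.overlap C γ i j ↔ C (f.act γ⁻¹ x) = i ∧ C x = j := by
  rw [overlap_eq]
  rfl

theorem PMP.measurableSet_overlap [MeasurableSpace κ] [MeasurableSingletonClass κ]
    (f : PMP G X μ) {C : X → κ} (hC : Measurable C) (γ : G) (i j : κ) :
    MeasurableSet (f.overlap C γ i j) := by
  rw [overlap_eq]
  exact (f.measurable _ (hC (measurableSet_singleton i))).inter (hC (measurableSet_singleton j))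

theorem PMP.isClopen_overlap [TopologicalSpace X] {f : PMP G X μ}
    (hf : ∀ γ, Continuous (f.act γ)) {C : X → κ} (hC : IsLocallyConstant C) (γ : G) (i j : κ) :
    IsClopen (f.overlap C γ i j) := by
  rw [overlap_eq]
  exact ((hC.isClopen_fiber i).preimage (hf _)).inter (hC.isClopen_fiber j)

theorem PMP.preimage_overlap {f : PMP G X μ} {g : PMP G Y ν} {Φ : X → Y}
    (hΦ : ∀ γ, Function.Semiconj Φ (f.act γ) (g.act γ)) (C : Y → κ) (γ : G) (i j : κ) :
    Φ ⁻¹' g.overlap C γ i j = f.overlap (C ∘ Φ) γ i j := by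
  ext x
  simp only [Set.mem_preimage, mem_overlap, Function.comp_apply, (hΦ γ⁻¹).eq]

theorem PMP.abs_measureReal_overlap_sub_le [IsFiniteMeasure μ] [MeasurableSpace κ]
    [MeasurableEq κ] (f : PMP G X μ) {C C' : X → κ} (hC : Measurable C)
    (hC' : Measurable C') (γ : G) (i j : κ) :
    |μ.real (f.overlap C γ i j) - μ.real (f.overlap C' γ i j)| ≤ 2 * μ.real {x | C x ≠ C' x} := by
  set E : Set X := {x | C x ≠ C' x}
  have hE : MeasurableSet E := (measurableSet_eq_fun hC hC').compl
  have symmDiff_subset : f.overlap C γ i j ∆ f.overlap C' γ i j ⊆ f.act γ⁻¹ ⁻¹' E ∪ E := by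
    intro x hx
    simp only [Set.mem_symmDiff, mem_overlap] at hx
    simp only [E, Set.mem_union, Set.mem_preimage, Set.mem_ofPred_eq]
    grind
  calc |μ.real (f.overlap C γ i j) - μ.real (f.overlap C' γ i j)|
      ≤ μ.real (f.overlap C γ i j ∆ f.overlap C' γ i j) :=
        abs_measureReal_sub_le_measureReal_symmDiff
          (f.measurableSet_overlap hC γ i j).nullMeasurableSet
          (f.measurableSet_overlap hC' γ i j).nullMeasurableSet
    _ ≤ μ.real (f.act γ⁻¹ ⁻¹' E ∪ E) := measureReal_mono symmDiff_subset
    _ ≤ μ.real (f.act γ⁻¹ ⁻¹' E) + μ.real E := measureReal_union_le _ _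
    _ = 2 * μ.real E := by
        rw [(f.preserves γ⁻¹).measureReal_preimage hE.nullMeasurableSet, two_mul]

end Overlap

/-! ### Factor maps -/

section FactorMap

variable {G X Y Z : Type*} [Group G] [MeasurableSpace X] [MeasurableSpace Y] [MeasurableSpace Z]
  {μ : Measure X} {ν : Measure Y} {f : PMP G X μ} {g : PMP G Y ν} {π : Y → X}

/-- `π` exhibits `f` as a factor of `g`: it is measure preserving and almost everywhere
equivariant. -/
structure IsFactorMap (g : PMP G Y ν) (f : PMP G X μ) (π : Y → X) : Prop where
  measurePreserving : MeasurePreserving π ν μ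
  ae_equivariant : ∀ γ, ∀ᵐ y ∂ν, π (g.act γ y) = f.act γ (π y)

theorem IsFactorMap.isFreeAction [Countable G] (hπ : IsFactorMap g f π) (hf : IsFreeAction f) :
    IsFreeAction g := by
  filter_upwards [hπ.measurePreserving.quasiMeasurePreserving.ae hf,
    ae_all_iff.2 hπ.ae_equivariant] with y free equivariant γ hγ
  exact free γ (by rw [← equivariant, hγ])

theorem IsFactorMap.measure_overlap {κ : Type*} [MeasurableSpace κ] [MeasurableSingletonClass κ]
    (hπ : IsFactorMap g f π) {C : X → κ} (hC : Measurable C) (γ : G) (i j : κ) :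
    ν (g.overlap (C ∘ π) γ i j) = μ (f.overlap C γ i j) := by
  rw [← hπ.measurePreserving.measure_preimage (f.measurableSet_overlap hC γ i j).nullMeasurableSet]
  refine measure_congr (eventuallyEq_set.2 ?_)
  filter_upwards [hπ.ae_equivariant γ⁻¹] with y hy
  simp only [Set.mem_preimage, PMP.mem_overlap, Function.comp_apply, hy]

theorem IsFactorMap.weaklyContains (hπ : IsFactorMap g f π) : WeaklyContains g f := by
  refine fun n _ C hC F ε hε =>
    ⟨C ∘ π, hC.comp hπ.measurePreserving.measurable, fun i j γ _ => ?_⟩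
  have overlap_eq := congrArg ENNReal.toReal (hπ.measure_overlap hC γ i j)
  exact (abs_sub_nonpos.2 overlap_eq).trans hε.le

theorem isFactorMap_comp_of_map_eq [MeasurableEq X] {q : Y → Z} {J : X → Z} {ρ : Z → X}
    {T : G → Z → Z} (hq : Measurable q) (hJ : Measurable J) (hρ : Measurable ρ)
    (hT : ∀ γ, Measurable (T γ)) (map_eq : ν.map q = μ.map J)
    (leftInverse : Function.LeftInverse ρ J)
    (q_semiconj : ∀ γ, Function.Semiconj q (g.act γ) (T γ))
    (J_semiconj : ∀ γ, Function.Semiconj J (f.act γ) (T γ)) :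
    IsFactorMap g f (ρ ∘ q) where
  measurePreserving := by
    refine ⟨hρ.comp hq, ?_⟩
    rw [← Measure.map_map hρ hq, map_eq, Measure.map_map hρ hJ, leftInverse.comp_eq_id,
      Measure.map_id]
  ae_equivariant γ := by
    have ae_law : ∀ᵐ z ∂ν.map q, ρ (T γ z) = f.act γ (ρ z) := by
      rw [map_eq]
      refine (ae_map_iff hJ.aemeasurable (measurableSet_eq_fun (hρ.comp (hT γ))
        ((f.measurable γ).comp hρ))).2 ?_
      refine ae_of_all _ fun x => ?_
      simp only [Function.comp_apply, ← (J_semiconj γ).eq x, leftInverse _]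
    filter_upwards [ae_of_ae_map hq.aemeasurable ae_law] with y hy
    simpa only [Function.comp_apply, (q_semiconj γ).eq] using hy

end FactorMap

/-! ### Limits in distribution -/

section LimitInDistribution

variable {X Y Z ι : Type*} [MeasurableSpace X] [MeasurableSpace Y] [MeasurableSpace Z]
  [TopologicalSpace Y] [BorelSpace Y] [TopologicalSpace Z] [BorelSpace Z]
  {μ : Measure X} [IsProbabilityMeasure μ] {ν : Measure Y} [IsProbabilityMeasure ν]
  {l : Filter ι} {Φ : ι → X → Y}

theorem exists_tendstoInDistribution_of_compactSpace [CompactSpace (ProbabilityMeasure Y)]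
    (l₀ : Filter ι) [l₀.NeBot] (hΦ : ∀ i, Measurable (Φ i)) :
    ∃ l ≤ l₀, l.NeBot ∧ ∃ ν : ProbabilityMeasure Y,
      TendstoInDistribution Φ l id (fun _ => μ) (ν : Measure Y) := by
  let law : ι → ProbabilityMeasure Y := fun i =>
    ⟨μ.map (Φ i), Measure.isProbabilityMeasure_map (hΦ i).aemeasurable⟩
  refine ⟨Ultrafilter.of l₀, Ultrafilter.of_le l₀, inferInstance,
    ((Ultrafilter.of l₀).map law).lim, fun i => (hΦ i).aemeasurable, aemeasurable_id, ?_⟩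
  simp only [Measure.map_id]
  exact ((Ultrafilter.of l₀).map law).le_nhds_lim

theorem tendsto_measureReal_preimage_of_isClopen [HasOuterApproxClosed Y]
    (hΦ : ∀ i, Measurable (Φ i)) (h : TendstoInDistribution Φ l id (fun _ => μ) ν)
    {E : Set Y} (hE : IsClopen E) :
    Tendsto (fun i => μ.real (Φ i ⁻¹' E)) l (𝓝 (ν.real E)) := by
  have tendsto_law := NNReal.tendsto_coe.2
    (ProbabilityMeasure.tendsto_measure_of_isClopen_of_tendsto h.tendsto hE)
  have hEm := hE.isOpen.measurableSet
  have law_real : ∀ i, (μ.map (Φ i)).real E = μ.real (Φ i ⁻¹' E) := fun i =>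
    map_measureReal_apply (hΦ i) hEm
  have limit_real : (ν.map id).real E = ν.real E := by rw [Measure.map_id]
  exact limit_real ▸ tendsto_law.congr law_real

theorem tendstoInDistribution_of_forall_identDistrib {Ω : Type*} [MeasurableSpace Ω]
    {ρ : Measure Ω} [IsProbabilityMeasure ρ] {Ψ : ι → X → Y} {W : Ω → Y}
    (h : TendstoInDistribution Φ l W (fun _ => μ) ρ) (hΨ : ∀ i, IdentDistrib (Ψ i) (Φ i) μ μ) :
    TendstoInDistribution Ψ l W (fun _ => μ) ρ := by
  refine ⟨fun i => (hΨ i).aemeasurable_fst, h.aemeasurable_limit, ?_⟩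
  simp only [fun i => (hΨ i).map_eq]
  exact h.tendsto

theorem map_eq_map_of_tendstoInDistribution [HasOuterApproxClosed Z] [l.NeBot]
    (h : TendstoInDistribution Φ l id (fun _ => μ) ν) {q : Y → Z} (hq : Continuous q)
    {J : X → Z} (hJ : ∀ i, IdentDistrib (q ∘ Φ i) J μ μ) :
    ν.map q = μ.map J := by
  obtain ⟨i⟩ := l.nonempty_of_neBot
  exact tendstoInDistribution_unique _ (h.continuous_comp hq)
    (tendstoInDistribution_of_identDistrib i (fun j => (hJ i).trans (hJ j).symm) (hJ i))

theorem measurePreserving_of_tendstoInDistribution [HasOuterApproxClosed Y] [l.NeBot]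
    (hΦ : ∀ i, Measurable (Φ i)) (h : TendstoInDistribution Φ l id (fun _ => μ) ν)
    {T : X → X} (hT : MeasurePreserving T μ μ) {S : Y → Y} (hS : Continuous S)
    (semiconj : ∀ i, Function.Semiconj (Φ i) T S) : MeasurePreserving S ν ν := by
  refine ⟨hS.measurable, ?_⟩
  have same_law : ∀ i, IdentDistrib (S ∘ Φ i) (Φ i) μ μ := fun i =>
    ⟨(hS.measurable.comp (hΦ i)).aemeasurable, (hΦ i).aemeasurable, by
      rw [← (semiconj i).comp_eq, ← Measure.map_map (hΦ i) hT.measurable, hT.map_eq]⟩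
  exact (tendstoInDistribution_unique _ (h.continuous_comp hS)
    (tendstoInDistribution_of_forall_identDistrib h same_law)).trans Measure.map_id

end LimitInDistribution

section LimitOfFactors

variable {G X Y ι : Type*} [Group G] [MeasurableSpace X] [MeasurableSpace Y]
  [TopologicalSpace Y] [BorelSpace Y] {μ : Measure X} [IsProbabilityMeasure μ]
  {ν : Measure Y} [IsProbabilityMeasure ν] {f : PMP G X μ} {g : PMP G Y ν} {l : Filter ι}
  {Φ : ι → X → Y}

/-- The equivariant maps `Φ i` exhibit `g` as a weak limit of factors of `f`: their laws, which are
the factors, converge to the measure of `g` along `l`. -/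
structure IsLimitOfFactors (f : PMP G X μ) (g : PMP G Y ν) (l : Filter ι) (Φ : ι → X → Y) :
    Prop where
  measurable : ∀ i, Measurable (Φ i)
  semiconj : ∀ i γ, Function.Semiconj (Φ i) (f.act γ) (g.act γ)
  tendstoInDistribution : TendstoInDistribution Φ l id (fun _ => μ) ν

theorem IsLimitOfFactors.exists_overlap_close [HasOuterApproxClosed Y] [l.NeBot]
    (h : IsLimitOfFactors f g l Φ) (hg : ∀ γ, Continuous (g.act γ)) {κ : Type*} [Finite κ]
    {C : Y → κ} (hC : IsLocallyConstant C) (F : Finset G) {ε : ℝ} (hε : 0 < ε) :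
    ∃ m, ∀ i j, ∀ γ ∈ F,
      |μ.real (f.overlap (C ∘ Φ m) γ i j) - ν.real (g.overlap C γ i j)| < ε := by
  have eventually_close : ∀ᶠ m in l, ∀ i j, ∀ γ ∈ F,
      |μ.real (f.overlap (C ∘ Φ m) γ i j) - ν.real (g.overlap C γ i j)| < ε := by
    refine eventually_all.2 fun i => eventually_all.2 fun j =>
      (eventually_all_finset F).2 fun γ _ => ?_
    have tendsto_overlap := tendsto_measureReal_preimage_of_isClopen h.measurable
      h.tendstoInDistribution (PMP.isClopen_overlap hg hC γ i j)
    simp only [PMP.preimage_overlap (h.semiconj _)] at tendsto_overlap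
    exact Metric.tendsto_nhds.1 tendsto_overlap ε hε
  exact eventually_close.exists

theorem IsLimitOfFactors.weaklyContains [SecondCountableTopology Y] [HasOuterApproxClosed Y]
    [l.NeBot] (hY : IsTopologicalBasis {s : Set Y | IsClopen s})
    (h : IsLimitOfFactors f g l Φ) (hg : ∀ γ, Continuous (g.act γ)) : WeaklyContains f g := by
  intro n hn C hC F ε hε
  have : NeZero n := ⟨Nat.one_le_iff_ne_zero.1 hn⟩
  obtain ⟨C', hC', ne_le⟩ := exists_isLocallyConstant_measureReal_ne_le hY ν hC
    (show 0 < ε / 4 by positivity)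
  obtain ⟨m, hm⟩ := h.exists_overlap_close hg hC' F (half_pos hε)
  have hC'm : Measurable C' := hC'.continuous.measurable
  refine ⟨C' ∘ Φ m, hC'm.comp (h.measurable m), fun i j γ hγ => ?_⟩
  calc |μ.real (f.overlap (C' ∘ Φ m) γ i j) - ν.real (g.overlap C γ i j)|
      ≤ |μ.real (f.overlap (C' ∘ Φ m) γ i j) - ν.real (g.overlap C' γ i j)|
        + |ν.real (g.overlap C' γ i j) - ν.real (g.overlap C γ i j)| := abs_sub_le _ _ _
    _ ≤ ε / 2 + 2 * (ε / 4) := by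
        rw [abs_sub_comm (ν.real (g.overlap C' γ i j))]
        gcongr
        · exact (hm i j γ hγ).le
        · exact (g.abs_measureReal_overlap_sub_le hC hC'm γ i j).trans (by gcongr)
    _ = ε := by ring

end LimitOfFactors

/-! ### Local rules -/

section LocalRule

theorem finite_cayleyBall {G : Type*} [Group G] (S : Finset G) (r : ℕ) :
    (cayleyBall S r).Finite := by
  let generators : Set G := {x | x ∈ S ∨ x⁻¹ ∈ S}
  have : Finite generators :=
    (S.finite_toSet.union (S.finite_toSet.preimage inv_injective.injOn)).to_subtype
  refine ((List.finite_length_le generators r).image fun l => (l.map Subtype.val).prod).subset ?_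
  rintro γ ⟨l, length_le, mem_generators, rfl⟩
  exact ⟨l.attachWith _ mem_generators, by simpa using length_le,
    congrArg List.prod (List.attachWith_map_subtype_val mem_generators)⟩

variable {G X Y ι : Type*} [Group G] [MeasurableSpace X] [MeasurableSpace Y]
  {μ : Measure X} {ν : Measure Y} {f : PMP G X μ} {g : PMP G Y ν} {S : Finset G} {r k : ℕ}

theorem ballColoring_comp_of_semiconj {Φ : X → Y}
    (hΦ : ∀ γ, Function.Semiconj Φ (f.act γ) (g.act γ)) (φ : Y → Fin k) (x : X) :
    ballColoring f S r k (φ ∘ Φ) x = ballColoring g S r k φ (Φ x) :=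
  funext fun γ => congrArg φ ((hΦ γ).eq x)

theorem isClopen_setOf_ballColoring_mem [TopologicalSpace Y] (hg : ∀ γ, Continuous (g.act γ))
    {φ : Y → Fin k} (hφ : Continuous φ) (L : Set (cayleyBall S r → Fin k)) :
    IsClopen {y | ballColoring g S r k φ y ∈ L} := by
  have := (finite_cayleyBall S r).to_subtype
  have continuous_ballColoring : Continuous (ballColoring g S r k φ) :=
    continuous_pi fun γ => hφ.comp (hg γ)
  exact (isClopen_discrete L).preimage continuous_ballColoring

theorem IsLimitOfFactors.properlySatisfies [TopologicalSpace Y] [BorelSpace Y]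
    [HasOuterApproxClosed Y] [IsProbabilityMeasure μ] [IsProbabilityMeasure ν]
    {l : Filter ι} [l.NeBot] {Φ : ι → X → Y} (h : IsLimitOfFactors f g l Φ)
    (hg : ∀ γ, Continuous (g.act γ)) {L : Set (cayleyBall S r → Fin k)} {φ : Y → Fin k}
    (hφ : Continuous φ) {ε : ι → ℝ} (hε : Tendsto ε l (𝓝 0))
    (good : ∀ i, GoodColoring f S L (ε i) (φ ∘ Φ i)) : ProperlySatisfies g S L := by
  refine ⟨φ, hφ.measurable, ?_⟩
  set E : Set Y := {y | ballColoring g S r k φ y ∈ L}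
  have one_sub_le : ∀ i, 1 - ε i ≤ μ.real (Φ i ⁻¹' E) := fun i => by
    have good_measure := (good i).2
    simp only [ballColoring_comp_of_semiconj (h.semiconj i)] at good_measure
    exact good_measure
  have one_le : 1 - 0 ≤ ν.real E := le_of_tendsto_of_tendsto' (tendsto_const_nhds.sub hε)
    (tendsto_measureReal_preimage_of_isClopen h.measurable h.tendstoInDistribution
      (isClopen_setOf_ballColoring_mem hg hφ L)) one_sub_le
  have measureReal_eq_one : ν.real E = 1 := measureReal_le_one.antisymm (by simpa using one_le)
  exact (ENNReal.toReal_eq_one_iff _).1 measureReal_eq_one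

end LocalRule

/-! ### Shift actions and itineraries -/

section Shift

variable {G X A B ι : Type*} [Group G]

/-- The shift on `G → A` by right translation of the argument, which makes it a left action. -/
def shift (γ : G) (y : G → A) : G → A := fun δ => y (δ * γ)

theorem continuous_shift [TopologicalSpace A] (γ : G) : Continuous (shift γ : (G → A) → G → A) :=
  continuous_pi fun δ => continuous_apply (δ * γ)

theorem measurable_shift [MeasurableSpace A] (γ : G) : Measurable (shift γ : (G → A) → G → A) :=
  measurable_pi_lambda _ fun δ => measurable_pi_apply (δ * γ)

/-- The shift as a p.m.p. action on `G → A` equipped with a shift-invariant measure. -/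
def shiftAction [MeasurableSpace A] (ν : Measure (G → A))
    (hν : ∀ γ, MeasurePreserving (shift γ) ν ν) : PMP G (G → A) ν where
  act := shift
  measurable := measurable_shift
  preserves := hν
  act_one y := funext fun δ => congrArg y (mul_one δ)
  act_mul γ₁ γ₂ y := funext fun δ => congrArg y (mul_assoc δ γ₁ γ₂).symm

variable [MeasurableSpace X] {μ : Measure X}

/-- The itinerary of a point under an observable `u`: the values of `u` along its orbit. -/
def itinerary (f : PMP G X μ) (u : X → A) (x : X) : G → A := fun γ => u (f.act γ x)

theorem measurable_itinerary [MeasurableSpace A] (f : PMP G X μ) {u : X → A} (hu : Measurable u) :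
    Measurable (itinerary f u) :=
  measurable_pi_lambda _ fun γ => hu.comp (f.measurable γ)

theorem semiconj_itinerary_shift (f : PMP G X μ) (u : X → A) (γ : G) :
    Function.Semiconj (itinerary f u) (f.act γ) (shift γ) :=
  fun x => funext fun δ => congrArg u (f.act_mul δ γ x).symm

theorem exists_isLimitOfFactors_itinerary [Countable G] [IsProbabilityMeasure μ]
    [TopologicalSpace A] [CompactSpace A] [MetrizableSpace A] [MeasurableSpace A] [BorelSpace A]
    (f : PMP G X μ) (l₀ : Filter ι) [l₀.NeBot] {u : ι → X → A} (hu : ∀ i, Measurable (u i)) :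
    ∃ l ≤ l₀, l.NeBot ∧ ∃ (ν : ProbabilityMeasure (G → A))
      (hν : ∀ γ, MeasurePreserving (shift γ) (ν : Measure (G → A)) ν),
      IsLimitOfFactors f (shiftAction (ν : Measure (G → A)) hν) l fun i => itinerary f (u i) := by
  have hΦ := fun i => measurable_itinerary f (hu i)
  obtain ⟨l, hl, l_neBot, ν, hν⟩ :=
    exists_tendstoInDistribution_of_compactSpace (μ := μ) l₀ hΦ
  exact ⟨l, hl, l_neBot, ν,
    fun γ => measurePreserving_of_tendstoInDistribution hΦ hν (f.preserves γ)
      (continuous_shift γ) fun i => semiconj_itinerary_shift f (u i) γ,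
    hΦ, fun i => semiconj_itinerary_shift f (u i), hν⟩

theorem exists_isFactorMap_of_isLimitOfFactors_itinerary [Countable G] [IsProbabilityMeasure μ]
    [StandardBorelSpace X] [TopologicalSpace A] [TopologicalSpace B]
    [MeasurableSpace A] [MeasurableSpace B] [BorelSpace A] [BorelSpace (G → A × B)]
    [SecondCountableTopology A] [MetrizableSpace A]
    {f : PMP G X μ} {ν : Measure (G → A × B)} [IsProbabilityMeasure ν]
    {hν : ∀ γ, MeasurePreserving (shift γ) ν ν} {l : Filter ι} [l.NeBot] {e : X → A}
    (he : MeasurableEmbedding e) {φ : ι → X → B}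
    (h : IsLimitOfFactors f (shiftAction ν hν) l fun i => itinerary f fun x => (e x, φ i x)) :
    ∃ π, IsFactorMap (shiftAction ν hν) f π := by
  have : Nonempty X := μ.nonempty_of_neZero
  let q : (G → A × B) → G → A := fun y γ => (y γ).1
  have hq : Continuous q := by fun_prop
  have hJ := measurable_itinerary f he.measurable
  have map_eq : ν.map q = μ.map (itinerary f e) :=
    map_eq_map_of_tendstoInDistribution h.tendstoInDistribution hq
      fun _ => IdentDistrib.refl hJ.aemeasurable
  exact ⟨_, isFactorMap_comp_of_map_eq hq.measurable hJ
    (he.measurable_invFun.comp (measurable_pi_apply 1)) measurable_shift map_eq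
    (fun x => (he.leftInverse_invFun _).trans (f.act_one x)) (fun _ _ => rfl)
    (semiconj_itinerary_shift f e)⟩

end Shift

theorem exists_weakly_equivalent_extension_properly_satisfying_general
    {Γ : Type} {X : Type*} [Group Γ] [Countable Γ] (S : Finset Γ)
    [MeasurableSpace X] [StandardBorelSpace X] (μ : Measure X) [IsProbabilityMeasure μ]
    (r k : ℕ) (L : Set (cayleyBall S r → Fin k)) (α : PMP Γ X μ)
    (hα : AlmostSatisfies α S L) :
    ∃ B : PMPSpace Γ, (IsFreeAction α → IsFreeAction B.act) ∧ WeaklyEquivalent B.act α ∧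
      (∃ π, IsFactorMap B.act α π) ∧ ProperlySatisfies B.act S L := by
  obtain ⟨e, he, e_injective⟩ :=
    MeasurableSpace.measurable_injection_nat_bool_of_countablySeparated X
  choose φ hφ using fun n : ℕ => hα (1 / ((n : ℝ) + 1)) (by positivity)
  obtain ⟨l, hl, l_neBot, ν, hν, hlim⟩ := exists_isLimitOfFactors_itinerary α atTop
    fun n => he.prodMk (hφ n).1
  have continuous_act : ∀ γ, Continuous ((shiftAction _ hν).act γ) := continuous_shift
  obtain ⟨π, hπ⟩ := exists_isFactorMap_of_isLimitOfFactors_itinerary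
    (he.measurableEmbedding e_injective) hlim
  refine ⟨⟨_, _, inferInstance, ν, inferInstance, shiftAction _ hν⟩, hπ.isFreeAction,
    ⟨hπ.weaklyContains, hlim.weaklyContains isTopologicalBasis_isClopen continuous_act⟩,
    ⟨π, hπ⟩, ?_⟩
  refine hlim.properlySatisfies continuous_act (φ := fun y => (y 1).2) (by fun_prop)
    (tendsto_one_div_add_atTop_nhds_zero_nat.mono_left hl) fun n => ?_
  have coordinate_one : (fun y => (y 1).2) ∘ itinerary α (fun x => (e x, φ n x)) = φ n :=
    funext fun x => congrArg (φ n) (α.act_one x)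
  exact coordinate_one.symm ▸ hφ n

theorem exists_weakly_equivalent_extension_properly_satisfying
    {Γ X : Type} [Group Γ] [Countable Γ] (S : Finset Γ)
    (hS : Subgroup.closure (S : Set Γ) = ⊤)
    [MeasurableSpace X] [StandardBorelSpace X]
    (μ : Measure X) [IsProbabilityMeasure μ]
    (r k : ℕ) (L : Set (cayleyBall S r → Fin k))
    (α : PMP Γ X μ) (hαfree : IsFreeAction α)
    (hα : ∀ ε : ℝ, 0 < ε → ∃ φ : X → Fin k, GoodColoring α S L ε φ) :
    ∃ B : PMPSpace Γ, IsFreeAction B.act ∧ WeaklyEquivalent B.act α ∧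
      (∃ π : B.Y → X, Measurable π ∧ B.ν.map π = μ ∧
        ∀ γ : Γ, ∀ᵐ y ∂B.ν, π (B.act.act γ y) = α.act γ (π y)) ∧
      ∃ φ : B.Y → Fin k, Measurable φ ∧
        B.ν {y | ballColoring B.act S r k φ y ∈ L} = 1 := by
  obtain ⟨B, free, weaklyEquivalent, ⟨π, hπ⟩, properlySatisfies⟩ :=
    exists_weakly_equivalent_extension_properly_satisfying_general S μ r k L α hα
  exact ⟨B, free hαfree, weaklyEquivalent, ⟨π, hπ.measurePreserving.measurable,
    hπ.measurePreserving.map_eq, hπ.ae_equivariant⟩, properlySatisfies⟩
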